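/- arXiv:math/0604220 — 2 statements merged into one kernel-verified Lean document; each statement's English description precedes it below -/
import Mathlib

section
/- Let u_1, …, u_p ∈ L²(Ω, ℝⁿ) be random vectors. Define v_1 = u_1 and, recursively for i = 2, …, p, v_i = u_i − Σ_{k=1}^{i−1} Z_{ik} v_k, where Z_{ik} = 𝔼_{u_i v_k} 𝔼_{v_k v_k}^† + A_{ik}(I − 𝔼_{v_k v_k} 𝔼_{v_k v_k}^†) with A_{ik} ∈ ℝ^{n×n} arbitrary matrices. Then the vectors v_1, …, v_p are pairwise uncorrelated: 𝔼_{v_i v_j} = 0 whenever i ≠ j. (No invertibility of the covariance matrices 𝔼_{v_k v_k} is assumed.) -/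
/-!
The crucial fact is that `𝔼_{uw} 𝔼_{ww}^† 𝔼_{ww} = 𝔼_{uw}` for all square-integrable `u`, `w`,
even when `𝔼_{ww}` is singular. Indeed `N = I - 𝔼_{ww}^† 𝔼_{ww}` satisfies `𝔼_{ww} N = 0`, so the
random vector `Nᵀ w` has covariance `Nᵀ 𝔼_{ww} N = 0`; its components are almost surely constant,
hence uncorrelated with `u`, which says `𝔼_{uw} N = 0` (`cov_mul_eq_zero`).

By strong induction on `i`, `𝔼_{v_i v_j} = 0` for all `j < i`: bilinearity and the induction
hypothesis leave `𝔼_{v_i v_j} = 𝔼_{u_i v_j} - Z_{ij} 𝔼_{v_j v_j}`. The `A_{ij}` term vanishes because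
`(I - C C^†) C = 0`, and the rest vanishes by the fact above. Symmetry handles `j > i`.
-/

open MeasureTheory Matrix BigOperators

noncomputable def vmean {Ω : Type*} [MeasurableSpace Ω] {n : ℕ} (μ : Measure Ω)
    (g : Ω → Fin n → ℝ) : Fin n → ℝ :=
  fun i => ∫ ω, g ω i ∂μ

/-- Cross-covariance matrix `𝔼_{gh} = E[g hᵀ] - E[g] E[h]ᵀ`. -/
noncomputable def cov {Ω : Type*} [MeasurableSpace Ω] {m n : ℕ} (μ : Measure Ω)
    (g : Ω → Fin m → ℝ) (h : Ω → Fin n → ℝ) : Matrix (Fin m) (Fin n) ℝ :=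
  Matrix.of fun i j => (∫ ω, g ω i * h ω j ∂μ) - (∫ ω, g ω i ∂μ) * (∫ ω, h ω j ∂μ)

/-- `g ∈ L²(Ω, ℝⁿ)`: measurable with `E[‖g‖²] < ∞`. -/
def MemL2 {Ω : Type*} [MeasurableSpace Ω] {n : ℕ} (μ : Measure Ω)
    (g : Ω → Fin n → ℝ) : Prop :=
  Measurable g ∧ Integrable (fun ω => ∑ i, (g ω i) ^ 2) μ

/-- `P` is the Moore–Penrose pseudoinverse of `M`. -/
def IsMP {m n : ℕ} (M : Matrix (Fin m) (Fin n) ℝ) (P : Matrix (Fin n) (Fin m) ℝ) : Prop :=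
  M * P * M = M ∧ P * M * P = P ∧ (M * P)ᵀ = M * P ∧ (P * M)ᵀ = P * M

section Helpers

variable {Ω : Type*} [MeasurableSpace Ω] {μ : Measure Ω}

lemma MemL2.memLp_apply {n : ℕ} {g : Ω → Fin n → ℝ} (hg : MemL2 μ g) (i : Fin n) :
    MemLp (fun ω => g ω i) 2 μ := by
  have hm : Measurable fun ω => g ω i := (measurable_pi_apply i).comp hg.1
  rw [memLp_two_iff_integrable_sq hm.aestronglyMeasurable]
  refine hg.2.mono' (hm.pow_const 2).aestronglyMeasurable (.of_forall fun ω => ?_)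
  rw [Real.norm_of_nonneg (sq_nonneg _)]
  exact Finset.single_le_sum (f := fun i => g ω i ^ 2) (fun j _ => sq_nonneg _)
    (Finset.mem_univ i)

lemma memLp_mulVec_apply {m n : ℕ} (M : Matrix (Fin m) (Fin n) ℝ) {g : Ω → Fin n → ℝ}
    (hg : ∀ i, MemLp (fun ω => g ω i) 2 μ) (i : Fin m) :
    MemLp (fun ω => M.mulVec (g ω) i) 2 μ := by
  simp only [Matrix.mulVec, dotProduct]
  exact memLp_finsetSum _ fun j _ => (hg j).const_mul (M i j)

lemma cov_transpose {m n : ℕ} (g : Ω → Fin m → ℝ) (h : Ω → Fin n → ℝ) :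
    (cov μ g h)ᵀ = cov μ h g := by
  ext i j
  simp [cov, mul_comm]

variable [IsProbabilityMeasure μ]

lemma cov_apply_eq_covariance {m n : ℕ} {g : Ω → Fin m → ℝ} {h : Ω → Fin n → ℝ}
    (hg : ∀ i, MemLp (fun ω => g ω i) 2 μ) (hh : ∀ i, MemLp (fun ω => h ω i) 2 μ)
    (i : Fin m) (j : Fin n) :
    cov μ g h i j = ProbabilityTheory.covariance (fun ω => g ω i) (fun ω => h ω j) μ := by
  rw [ProbabilityTheory.covariance_eq_sub (hg i) (hh j)]
  rfl

lemma cov_mulVec_left {l m n : ℕ} (M : Matrix (Fin l) (Fin m) ℝ)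
    {g : Ω → Fin m → ℝ} {h : Ω → Fin n → ℝ}
    (hg : ∀ i, MemLp (fun ω => g ω i) 2 μ) (hh : ∀ i, MemLp (fun ω => h ω i) 2 μ) :
    cov μ (fun ω => M.mulVec (g ω)) h = M * cov μ g h := by
  ext i j
  rw [cov_apply_eq_covariance (memLp_mulVec_apply M hg) hh, Matrix.mul_apply]
  simp only [Matrix.mulVec, dotProduct]
  rw [ProbabilityTheory.covariance_fun_sum_left (fun k => (hg k).const_mul (M i k)) (hh j)]
  simp only [ProbabilityTheory.covariance_const_mul_left, cov_apply_eq_covariance hg hh]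

lemma cov_mulVec_right {l m n : ℕ} (M : Matrix (Fin l) (Fin n) ℝ)
    {g : Ω → Fin m → ℝ} {h : Ω → Fin n → ℝ}
    (hg : ∀ i, MemLp (fun ω => g ω i) 2 μ) (hh : ∀ i, MemLp (fun ω => h ω i) 2 μ) :
    cov μ g (fun ω => M.mulVec (h ω)) = cov μ g h * Mᵀ := by
  rw [← cov_transpose, cov_mulVec_left M hh hg, Matrix.transpose_mul, cov_transpose]

lemma cov_sub_sum_left {ι : Type*} {m n : ℕ} (s : Finset ι) {g : Ω → Fin m → ℝ}
    {f : ι → Ω → Fin m → ℝ} {h : Ω → Fin n → ℝ}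
    (hg : ∀ i, MemLp (fun ω => g ω i) 2 μ) (hf : ∀ k ∈ s, ∀ i, MemLp (fun ω => f k ω i) 2 μ)
    (hh : ∀ i, MemLp (fun ω => h ω i) 2 μ) :
    cov μ (fun ω => g ω - ∑ k ∈ s, f k ω) h = cov μ g h - ∑ k ∈ s, cov μ (f k) h := by
  have hs : ∀ i, MemLp (fun ω => ∑ k ∈ s, f k ω i) 2 μ := fun i =>
    memLp_finsetSum _ fun k hk => hf k hk i
  ext i j
  rw [cov_apply_eq_covariance _ hh, Matrix.sub_apply, Matrix.sum_apply,
    cov_apply_eq_covariance hg hh]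
  · simp only [Pi.sub_apply, Finset.sum_apply]
    rw [ProbabilityTheory.covariance_fun_sub_left (hg i) (hs i) (hh j),
      ProbabilityTheory.covariance_fun_sum_left' (fun k hk => hf k hk i) (hh j)]
    congr 1
    exact Finset.sum_congr rfl fun k hk => (cov_apply_eq_covariance (hf k hk) hh i j).symm
  · intro i
    simp only [Pi.sub_apply, Finset.sum_apply]
    exact (hg i).sub (hs i)

/-- A random vector with zero covariance matrix is almost surely constant, hence uncorrelated with
every random vector. -/
lemma cov_eq_zero_of_cov_self_eq_zero {m n : ℕ} {g : Ω → Fin m → ℝ} {h : Ω → Fin n → ℝ}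
    (hg : ∀ i, MemLp (fun ω => g ω i) 2 μ) (hh : ∀ i, MemLp (fun ω => h ω i) 2 μ)
    (h0 : cov μ h h = 0) : cov μ g h = 0 := by
  ext i j
  have hvar : ProbabilityTheory.variance (fun ω => h ω j) μ = 0 := by
    rw [← ProbabilityTheory.covariance_self (hh j).aemeasurable,
      ← cov_apply_eq_covariance hh hh, h0, Matrix.zero_apply]
  rw [cov_apply_eq_covariance hg hh, ProbabilityTheory.covariance, Matrix.zero_apply]
  refine integral_eq_zero_of_ae ?_
  filter_upwards [ProbabilityTheory.ae_eq_integral_of_variance_eq_zero (hh j) hvar] with ω hω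
  simp [← hω]

/-- The kernel of `𝔼_{hh}` is contained in that of `𝔼_{gh}`. -/
lemma cov_mul_eq_zero {l m n : ℕ} {g : Ω → Fin m → ℝ} {h : Ω → Fin n → ℝ}
    (hg : ∀ i, MemLp (fun ω => g ω i) 2 μ) (hh : ∀ i, MemLp (fun ω => h ω i) 2 μ)
    (N : Matrix (Fin n) (Fin l) ℝ) (hN : cov μ h h * N = 0) : cov μ g h * N = 0 := by
  have hw := memLp_mulVec_apply Nᵀ hh
  have h0 : cov μ (fun ω => Nᵀ.mulVec (h ω)) (fun ω => Nᵀ.mulVec (h ω)) = 0 := by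
    rw [cov_mulVec_left _ hh hw, cov_mulVec_right _ hh hh, Matrix.transpose_transpose, hN,
      Matrix.mul_zero]
  rw [← cov_eq_zero_of_cov_self_eq_zero hg hw h0, cov_mulVec_right _ hg hh,
    Matrix.transpose_transpose]

lemma cov_mul_pinv_mul_cov {m n : ℕ} {g : Ω → Fin m → ℝ} {h : Ω → Fin n → ℝ}
    (hg : ∀ i, MemLp (fun ω => g ω i) 2 μ) (hh : ∀ i, MemLp (fun ω => h ω i) 2 μ)
    {P : Matrix (Fin n) (Fin n) ℝ} (hP : IsMP (cov μ h h) P) :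
    cov μ g h * P * cov μ h h = cov μ g h := by
  have h0 := cov_mul_eq_zero hg hh (1 - P * cov μ h h) (by
    rw [Matrix.mul_sub, Matrix.mul_one, ← Matrix.mul_assoc, hP.1, sub_self])
  rw [Matrix.mul_sub, Matrix.mul_one, ← Matrix.mul_assoc] at h0
  exact (sub_eq_zero.mp h0).symm

end Helpers

theorem pinv_gram_schmidt_pairwise_uncorrelated
    {Ω : Type*} [MeasurableSpace Ω] (μ : Measure Ω) [IsProbabilityMeasure μ]
    {n p : ℕ} (u v : Fin p → Ω → Fin n → ℝ)
    (hu : ∀ i, MemL2 μ (u i))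
    (P : Fin p → Matrix (Fin n) (Fin n) ℝ)
    (hP : ∀ k, IsMP (cov μ (v k) (v k)) (P k))
    (A : Fin p → Fin p → Matrix (Fin n) (Fin n) ℝ)
    (hv : ∀ i, v i = fun ω => u i ω -
      ∑ k ∈ Finset.univ.filter (fun k => k < i),
        (cov μ (u i) (v k) * P k + A i k * (1 - cov μ (v k) (v k) * P k)).mulVec (v k ω)) :
    ∀ i j, i ≠ j → cov μ (v i) (v j) = 0 := by
  have hu2 : ∀ i a, MemLp (fun ω => u i ω a) 2 μ := fun i a => (hu i).memLp_apply a
  have hv2 : ∀ i a, MemLp (fun ω => v i ω a) 2 μ := by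
    intro i
    induction i using WellFoundedLT.induction with
    | ind i ih =>
      intro a
      rw [hv i]
      simp only [Pi.sub_apply, Finset.sum_apply]
      exact (hu2 i a).sub (memLp_finsetSum _ fun k hk =>
        memLp_mulVec_apply _ (ih k (Finset.mem_filter.mp hk).2) a)
  have main : ∀ i j, j < i → cov μ (v i) (v j) = 0 := by
    intro i
    induction i using WellFoundedLT.induction with
    | ind i ih =>
      intro j hj
      rw [hv i, cov_sub_sum_left _ (hu2 i) (fun k _ => memLp_mulVec_apply _ (hv2 k)) (hv2 j),
        Finset.sum_eq_single_of_mem j (by simpa using hj)]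
      · rw [cov_mulVec_left _ (hv2 j) (hv2 j), Matrix.add_mul, Matrix.mul_assoc (A i j),
          Matrix.sub_mul, Matrix.one_mul, (hP j).1, sub_self, Matrix.mul_zero, add_zero,
          cov_mul_pinv_mul_cov (hu2 i) (hv2 j) (hP j), sub_self]
      · intro k hk hkj
        have hki : k < i := (Finset.mem_filter.mp hk).2
        rw [cov_mulVec_left _ (hv2 k) (hv2 j)]
        rcases lt_or_gt_of_ne hkj with h | h
        · rw [← cov_transpose (v j) (v k), ih j hj k h, Matrix.transpose_zero, Matrix.mul_zero]
        · rw [ih k hki j h, Matrix.mul_zero]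
  intro i j hij
  rcases lt_or_gt_of_ne hij with h | h
  · rw [← cov_transpose, main j i h, Matrix.transpose_zero]
  · exact main i j h
end

section
/- Let x ∈ L²(Ω, ℝᵐ) and let v_1, …, v_p ∈ L²(Ω, ℝⁿ) be pairwise orthonormal random vectors, i.e. 𝔼_{v_i v_j} = 0 for i ≠ j and 𝔼_{v_i v_i} = I for all i. Then for every f ∈ ℝᵐ and all matrices F_1, …, F_p ∈ ℝ^{m×n}: E[‖x − f − Σ_{k=1}^p F_k v_k‖²] = tr(𝔼_{xx}) − Σ_{k=1}^p ‖𝔼_{x v_k}‖² + ‖f − E[x] + Σ_{k=1}^p F_k E[v_k]‖² + Σ_{k=1}^p ‖F_k − 𝔼_{x v_k}‖², where ‖·‖ on matrices is the Frobenius norm and ‖·‖ on vectors is the Euclidean norm. -/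
/-!
The mean square of a scalar square-integrable `Y` is its variance plus the square of its mean.
For one coordinate of the error, `Y = X - c - ∑ a, A a * W a` with `W` an orthonormal family for the
covariance form, bilinearity gives
`cov[Y, Y] = cov[X, X] - 2 ∑ a, A a * cov[X, W a] + ∑ a, A a ^ 2`, and completing the square in
each `A a` yields the claim in that coordinate (`scalar_error_decomposition`). Here the index `a`
runs over the pairs `(k, j)`, so that `W (k, j)` is the `j`-th entry of `v k` and `A (k, j)` is the
entry `F k i j`. Summing over the coordinates `i` of `x` gives the matrix identity.
-/

open MeasureTheory Matrix BigOperators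

/-- Squared Frobenius norm `‖M‖² = tr (M Mᵀ)`. -/
noncomputable def sqFrob {m n : ℕ} (M : Matrix (Fin m) (Fin n) ℝ) : ℝ :=
  Matrix.trace (M * Mᵀ)

/-- The error functional `J(f, F₁, …, F_p) = E[‖x - f - Σ_k F_k v_k‖²]`. -/
noncomputable def errJ {Ω : Type*} [MeasurableSpace Ω] {m n p : ℕ} (μ : Measure Ω)
    (x : Ω → Fin m → ℝ) (v : Fin p → Ω → Fin n → ℝ) (f : Fin m → ℝ)
    (F : Fin p → Matrix (Fin m) (Fin n) ℝ) : ℝ :=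
  ∫ ω, ∑ i, (x ω i - f i - ∑ k, (F k).mulVec (v k ω) i) ^ 2 ∂μ

open ProbabilityTheory

lemma MemL2.memLp {Ω : Type*} [MeasurableSpace Ω] {n : ℕ} {μ : Measure Ω}
    {g : Ω → Fin n → ℝ} (hg : MemL2 μ g) (i : Fin n) : MemLp (fun ω => g ω i) 2 μ := by
  have hm : Measurable fun ω => g ω i := (measurable_pi_apply i).comp hg.1
  rw [memLp_two_iff_integrable_sq hm.aestronglyMeasurable]
  refine hg.2.mono (hm.pow_const 2).aestronglyMeasurable (Filter.Eventually.of_forall fun ω => ?_)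
  rw [Real.norm_of_nonneg (sq_nonneg _),
    Real.norm_of_nonneg (Finset.sum_nonneg fun j _ => sq_nonneg _)]
  exact Finset.single_le_sum (f := fun j => g ω j ^ 2) (fun j _ => sq_nonneg _)
    (Finset.mem_univ i)

lemma cov_apply {Ω : Type*} [MeasurableSpace Ω] {μ : Measure Ω} [IsProbabilityMeasure μ]
    {m n : ℕ} {g : Ω → Fin m → ℝ} {h : Ω → Fin n → ℝ} (hg : MemL2 μ g) (hh : MemL2 μ h)
    (i : Fin m) (j : Fin n) :
    cov μ g h i j = covariance (fun ω => g ω i) (fun ω => h ω j) μ := by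
  rw [covariance_eq_sub (hg.memLp i) (hh.memLp j)]
  rfl

lemma sqFrob_eq_sum {m n : ℕ} (M : Matrix (Fin m) (Fin n) ℝ) :
    sqFrob M = ∑ i, ∑ j, M i j ^ 2 := by
  simp [sqFrob, Matrix.trace, Matrix.mul_apply, sq]

/-- The error decomposition for a scalar variable `X` and a finite family `W` of scalar variables
that is orthonormal for the covariance form. -/
lemma scalar_error_decomposition {Ω ι : Type*} [MeasurableSpace Ω] [Fintype ι] [DecidableEq ι]
    {μ : Measure Ω} [IsProbabilityMeasure μ] {X : Ω → ℝ} (hX : MemLp X 2 μ)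
    {W : ι → Ω → ℝ} (hW : ∀ a, MemLp (W a) 2 μ)
    (horth : ∀ a b, covariance (W a) (W b) μ = if a = b then 1 else 0) (c : ℝ) (A : ι → ℝ) :
    ∫ ω, (X ω - c - ∑ a, A a * W a ω) ^ 2 ∂μ
      = covariance X X μ - ∑ a, covariance X (W a) μ ^ 2
        + (c - ∫ ω, X ω ∂μ + ∑ a, A a * ∫ ω, W a ω ∂μ) ^ 2
        + ∑ a, (A a - covariance X (W a) μ) ^ 2 := by
  have hAW : ∀ a, MemLp (fun ω => A a * W a ω) 2 μ := fun a => (hW a).const_mul (A a)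
  have hS : MemLp (fun ω => ∑ a, A a * W a ω) 2 μ := memLp_finsetSum _ fun a _ => hAW a
  have hc : MemLp (fun _ : Ω => c) 2 μ := memLp_const c
  have hXc : MemLp (fun ω => X ω - c) 2 μ := hX.sub hc
  have hY : MemLp (fun ω => X ω - c - ∑ a, A a * W a ω) 2 μ := hXc.sub hS
  have hXi := hX.integrable one_le_two
  have hXS : covariance X (fun ω => ∑ a, A a * W a ω) μ = ∑ a, A a * covariance X (W a) μ := by
    rw [covariance_fun_sum_right hAW hX]
    simp_rw [covariance_const_mul_right]
  have hSS : covariance (fun ω => ∑ a, A a * W a ω) (fun ω => ∑ a, A a * W a ω) μ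
      = ∑ a, A a ^ 2 := by
    rw [covariance_fun_sum_fun_sum hAW hAW]
    simp_rw [covariance_const_mul_right, covariance_const_mul_left, horth]
    simp [sq]
  have hmean : ∫ ω, (X ω - c - ∑ a, A a * W a ω) ∂μ
      = ∫ ω, X ω ∂μ - c - ∑ a, A a * ∫ ω, W a ω ∂μ := by
    rw [integral_sub (hXc.integrable one_le_two) (hS.integrable one_le_two),
      integral_sub hXi (integrable_const c),
      integral_finsetSum _ fun a _ => (hAW a).integrable one_le_two]
    simp_rw [integral_const_mul]
    simp
  have hcov : covariance (fun ω => X ω - c - ∑ a, A a * W a ω)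
      (fun ω => X ω - c - ∑ a, A a * W a ω) μ
      = covariance X X μ - 2 * ∑ a, A a * covariance X (W a) μ + ∑ a, A a ^ 2 := by
    rw [covariance_fun_sub_fun_sub hXc hS hXc hS, hSS,
      covariance_comm (fun ω => ∑ a, A a * W a ω) (fun ω => X ω - c),
      covariance_sub_const_left hXi, covariance_sub_const_left hXi,
      covariance_sub_const_right hXi, hXS]
    ring
  have hsq := covariance_eq_sub hY hY
  rw [hcov, hmean] at hsq
  have hint : ∫ ω, (X ω - c - ∑ a, A a * W a ω) ^ 2 ∂μ
      = μ[(fun ω => X ω - c - ∑ a, A a * W a ω) * fun ω => X ω - c - ∑ a, A a * W a ω] := by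
    simp only [Pi.mul_apply, sq]
  have hexp : ∑ a, (A a - covariance X (W a) μ) ^ 2 = ∑ a, A a ^ 2
      - 2 * ∑ a, A a * covariance X (W a) μ + ∑ a, covariance X (W a) μ ^ 2 := by
    rw [Finset.mul_sum, ← Finset.sum_sub_distrib, ← Finset.sum_add_distrib]
    exact Finset.sum_congr rfl fun a _ => by ring
  rw [hint, hexp]
  linear_combination -hsq

theorem error_decomposition_orthonormal
    {Ω : Type*} [MeasurableSpace Ω] (μ : Measure Ω) [IsProbabilityMeasure μ]
    {m n p : ℕ} (x : Ω → Fin m → ℝ) (hx : MemL2 μ x)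
    (v : Fin p → Ω → Fin n → ℝ) (hv : ∀ k, MemL2 μ (v k))
    (horth : ∀ i j, i ≠ j → cov μ (v i) (v j) = 0)
    (hnorm : ∀ i, cov μ (v i) (v i) = 1) :
    ∀ (f : Fin m → ℝ) (F : Fin p → Matrix (Fin m) (Fin n) ℝ),
      errJ μ x v f F
        = Matrix.trace (cov μ x x) - ∑ k, sqFrob (cov μ x (v k))
          + ∑ i, (f i - vmean μ x i + ∑ k, (F k).mulVec (vmean μ (v k)) i) ^ 2
          + ∑ k, sqFrob (F k - cov μ x (v k)) := by
  intro f F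
  have hW : ∀ a : Fin p × Fin n, MemLp (fun ω => v a.1 ω a.2) 2 μ := fun a => (hv a.1).memLp a.2
  have hWW : ∀ a b : Fin p × Fin n, covariance (fun ω => v a.1 ω a.2) (fun ω => v b.1 ω b.2) μ
      = if a = b then 1 else 0 := by
    rintro ⟨k, i⟩ ⟨l, j⟩
    rw [← cov_apply (hv k) (hv l)]
    by_cases hkl : k = l
    · subst hkl
      simp [hnorm, Matrix.one_apply]
    · simp [horth k l hkl, hkl]
  have key := fun i => scalar_error_decomposition (hx.memLp i) hW hWW (f i) fun a => F a.1 i a.2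
  simp only [Fintype.sum_prod_type] at key
  have hY : ∀ i, MemLp (fun ω => x ω i - f i - ∑ k, ∑ j, F k i j * v k ω j) 2 μ := fun i =>
    ((hx.memLp i).sub (memLp_const (f i))).sub
      (memLp_finsetSum _ fun k _ => memLp_finsetSum _ fun j _ => ((hv k).memLp j).const_mul _)
  simp only [errJ, Matrix.mulVec, dotProduct, vmean]
  rw [integral_finsetSum _ fun i _ => (hY i).integrable_sq]
  simp_rw [key, sqFrob_eq_sum, Matrix.sub_apply, cov_apply hx (hv _), Matrix.trace,
    Matrix.diag_apply, cov_apply hx hx]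
  rw [Finset.sum_add_distrib, Finset.sum_add_distrib, Finset.sum_sub_distrib]
  congr 1
  · congr 2
    exact Finset.sum_comm
  · exact Finset.sum_comm
end
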